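/- Let C ⊆ ℝⁿ be a nonempty closed convex set and f : ℝⁿ × ℝⁿ → ℝ a bifunction with f(x,x) = 0 for all x ∈ C which is pseudomonotone on C. Let α_k > 0, and let x^k ∈ C, g^k ∈ ∂*₂ f(x^k, x^k) with ‖g^k‖ = 1 and x^{k+1} = P_C(x^k − α_k·g^k) for all k. Suppose x* ∈ S(EP) and that for each k and every y ∈ ℝⁿ, ⟨g^k, y − x^k⟩ > 0 implies f(x^k, y) > 0. Then ‖x^{k+1} − x*‖² ≤ ‖x^k − x*‖² + α_k² for all k. -/

import Mathlib

open scoped InnerProductSpace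

/-!
By pseudomonotonicity a solution `x*` of the equilibrium problem satisfies `f(x, x*) ≤ 0` for all
`x ∈ C`, so it cannot lie in the open half-space `⟪g, · - x⟫ > 0`, on which `f(x, ·)` is positive.
Hence the cross term in the expansion of `‖x - α g - x*‖²` is nonpositive, which leaves the error
`α² ‖g‖²`, and projecting onto `C` does not increase the distance to `x* ∈ C`.
-/

section Equilibrium

variable {X : Type*}

/-- Pseudomonotonicity of the bifunction `f` on `C`. -/
def PseudomonotoneOn (f : X → X → ℝ) (C : Set X) : Prop :=
  ∀ ⦃x⦄, x ∈ C → ∀ ⦃y⦄, y ∈ C → 0 ≤ f x y → f y x ≤ 0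

/-- `x` solves the equilibrium problem of `f` on `C`, that is, `x ∈ S(EP)`. -/
def IsEquilibriumOn (f : X → X → ℝ) (C : Set X) (x : X) : Prop :=
  x ∈ C ∧ ∀ ⦃y⦄, y ∈ C → 0 ≤ f x y

theorem PseudomonotoneOn.apply_equilibrium_nonpos {f : X → X → ℝ} {C : Set X} {x y : X}
    (hf : PseudomonotoneOn f C) (hx : IsEquilibriumOn f C x) (hy : y ∈ C) : f y x ≤ 0 :=
  hf hx.1 hy (hx.2 hy)

end Equilibrium

section FejerEstimate

variable {E : Type*} [SeminormedAddCommGroup E] [InnerProductSpace ℝ E]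

theorem norm_sub_sq_le_norm_sub_sq_of_inner_nonpos {u p y : E} (h : ⟪u - p, y - p⟫_ℝ ≤ 0) :
    ‖p - y‖ ^ 2 ≤ ‖u - y‖ ^ 2 := by
  have hexpand : ‖u - y‖ ^ 2 = ‖u - p‖ ^ 2 - 2 * ⟪u - p, y - p⟫_ℝ + ‖p - y‖ ^ 2 := by
    rw [← sub_sub_sub_cancel_right u y p, norm_sub_sq_real, norm_sub_rev y p]
  linarith [sq_nonneg ‖u - p‖]

theorem norm_sub_smul_sub_sq_le_of_inner_nonpos {x g y : E} {α : ℝ} (hα : 0 ≤ α)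
    (h : ⟪g, y - x⟫_ℝ ≤ 0) :
    ‖x - α • g - y‖ ^ 2 ≤ ‖x - y‖ ^ 2 + α ^ 2 * ‖g‖ ^ 2 := by
  have hexpand : ‖x - α • g - y‖ ^ 2 =
      ‖x - y‖ ^ 2 + 2 * (α * ⟪g, y - x⟫_ℝ) + α ^ 2 * ‖g‖ ^ 2 := by
    rw [sub_right_comm, norm_sub_sq_real, real_inner_smul_right, real_inner_comm,
      ← neg_sub y x, inner_neg_right, norm_neg, norm_smul, mul_pow, Real.norm_eq_abs, sq_abs]
    ring
  linarith [mul_nonpos_of_nonneg_of_nonpos hα h]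

theorem fejer_estimate_of_strict_quasiconvex_general {f : E → E → ℝ} {C : Set E}
    (hf : PseudomonotoneOn f C) {x x' g xs : E} {α : ℝ} (hα : 0 ≤ α) (hx : x ∈ C)
    (hproj : ∀ y ∈ C, ⟪x - α • g - x', y - x'⟫_ℝ ≤ 0) (hxs : IsEquilibriumOn f C xs)
    (hstrict : ∀ y ∈ C, 0 < ⟪g, y - x⟫_ℝ → 0 < f x y) :
    ‖x' - xs‖ ^ 2 ≤ ‖x - xs‖ ^ 2 + α ^ 2 * ‖g‖ ^ 2 := by
  have hinner : ⟪g, xs - x⟫_ℝ ≤ 0 :=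
    not_lt.mp fun hpos => (hstrict xs hxs.1 hpos).not_ge (hf.apply_equilibrium_nonpos hxs hx)
  calc
    ‖x' - xs‖ ^ 2 ≤ ‖x - α • g - xs‖ ^ 2 :=
      norm_sub_sq_le_norm_sub_sq_of_inner_nonpos (hproj xs hxs.1)
    _ ≤ ‖x - xs‖ ^ 2 + α ^ 2 * ‖g‖ ^ 2 := norm_sub_smul_sub_sq_le_of_inner_nonpos hα hinner

end FejerEstimate

/-- Under strict quasiconvexity of `f(x^k, ·)` (expressed via the star subgradient `g^k`),
the iterates of the normal-subgradient method satisfy the Fejér-type estimate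
`‖x^{k+1} - x*‖² ≤ ‖x^k - x*‖² + α_k²` for every solution `x*`. -/
theorem fejer_estimate_of_strict_quasiconvex (n : ℕ)
    (C : Set (EuclideanSpace ℝ (Fin n)))
    (hCne : C.Nonempty) (hCcl : IsClosed C) (hCcv : Convex ℝ C)
    (f : EuclideanSpace ℝ (Fin n) → EuclideanSpace ℝ (Fin n) → ℝ)
    (hdiag : ∀ x ∈ C, f x x = 0)
    (hpseudo : ∀ x ∈ C, ∀ y ∈ C, 0 ≤ f x y → f y x ≤ 0)
    (α : ℕ → ℝ) (hαpos : ∀ k, 0 < α k)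
    (x g : ℕ → EuclideanSpace ℝ (Fin n))
    (hxC : ∀ k, x k ∈ C)
    (hg : ∀ k, ∀ y : EuclideanSpace ℝ (Fin n), f (x k) y < 0 → ⟪g k, y - x k⟫_ℝ < 0)
    (hgnorm : ∀ k, ‖g k‖ = 1)
    (hproj : ∀ k, ∀ y ∈ C, ⟪(x k - α k • g k) - x (k + 1), y - x (k + 1)⟫_ℝ ≤ 0)
    (xs : EuclideanSpace ℝ (Fin n)) (hxs : xs ∈ C) (hxsS : ∀ y ∈ C, 0 ≤ f xs y)
    (hstrict : ∀ k, ∀ y : EuclideanSpace ℝ (Fin n),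
      0 < ⟪g k, y - x k⟫_ℝ → 0 < f (x k) y) :
    ∀ k, ‖x (k + 1) - xs‖ ^ 2 ≤ ‖x k - xs‖ ^ 2 + (α k) ^ 2 := fun k => by
  simpa only [hgnorm k, one_pow, mul_one] using fejer_estimate_of_strict_quasiconvex_general hpseudo
    (hαpos k).le (hxC k) (hproj k) ⟨hxs, hxsS⟩ fun y _ => hstrict k y
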